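/- Let G be an X-generated group. Then the quotient M_{sF}(G,X) = M(G,X)/ξ_G is an X-generated inverse monoid (via x ↦ (Γ_x,[x])ξ_G) which is strongly F-inverse, whose minimum group congruence is σ/ξ_G, and whose maximum group image is G. -/

import Mathlib

/-! Write `S = M_sF(G,X)`. Evaluation of words induces a morphism from `S` onto `G`, as all
defining relations hold in `G`. Its kernel is a group congruence, so σ-related classes have the
same value in `G`.

Everything else rests on one fact (`natLe_simple`): the class of a word `u` lies below the class
of every simple path word `p` with the same value in `G`. Erasing loops from `u` gives a simple
path word `q` with the same value and `Γ_q ⊆ Γ_u` (`exists_simple`). Hence `u u⁻¹ q` and `u` span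
the same subgraph and have the same value, so they agree in `M(G,X)`, i.e. `u ≤ q`; and `q = p`
in `S` since both are simple. Comparable elements are identified by every group congruence, so
words with equal value in `G` are σ-related, and the class of `p` is the maximum of its σ-class. -/

/-! Common framework: words over a doubled alphabet, inverse monoids,
presentations of inverse monoids as quotients of the free monoid on letters,
the minimum group congruence, F-inverse and strongly F-inverse properties,
and the Margolis-Meakin / M_sF machinery. -/

namespace SFI

/-- A letter of the doubled alphabet X̄ = X ∪ X⁻¹: a generator together with a
polarity (`true` = the generator itself, `false` = its formal inverse). -/
abbrev Letter (X : Type*) := X × Bool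

/-- Words over the doubled alphabet X̄, i.e. elements of the free monoid X̄*. -/
abbrev Word (X : Type*) := FreeMonoid (Letter X)

variable {X : Type*}

/-- The formal inverse of a letter. -/
def invL (a : Letter X) : Letter X := (a.1, !a.2)

theorem invL_invL (a : Letter X) : invL (invL a) = a := by
  cases a; simp [invL]

/-- Formal inversion of a word: reverse the word and invert each letter. -/
def wordInv (w : Word X) : Word X :=
  FreeMonoid.ofList (((FreeMonoid.toList w).reverse).map invL)

theorem wordInv_mul (u v : Word X) : wordInv (u * v) = wordInv v * wordInv u := by
  simp only [wordInv, FreeMonoid.toList_mul, List.reverse_append, List.map_append,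
    FreeMonoid.ofList_append]

theorem wordInv_wordInv (w : Word X) : wordInv (wordInv w) = w := by
  simp only [wordInv, FreeMonoid.toList_ofList, List.map_reverse, List.reverse_reverse,
    List.map_map]
  have : (invL ∘ invL : Letter X → Letter X) = id := funext invL_invL
  rw [this, List.map_id, FreeMonoid.ofList_toList]

/-- Evaluation of a letter in a monoid-with-inversion, along a map `ι` of generators. -/
def evalLetter {M : Type*} [Monoid M] [Inv M] (ι : X → M) (a : Letter X) : M :=
  if a.2 then ι a.1 else (ι a.1)⁻¹

/-- Evaluation of a word in a monoid-with-inversion, along a map `ι` of generators: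
`evalWord ι w` is the element `[w]` represented by the word `w`. -/
def evalWord {M : Type*} [Monoid M] [Inv M] (ι : X → M) (w : Word X) : M :=
  ((FreeMonoid.toList w).map (evalLetter ι)).prod

/-- `M` is `X`-generated via `ι : X → M` if every element of `M` is represented by
some word over the doubled alphabet X̄. -/
def XGen {M : Type*} [Monoid M] [Inv M] (ι : X → M) : Prop :=
  Function.Surjective (evalWord ι)

/-- Inverse monoids, as a variety: a monoid with an involutive anti-automorphism `⁻¹`
such that `a a⁻¹ a = a` and idempotents (elements of the form `a a⁻¹`) commute.
This is equivalent to every element having a unique von Neumann inverse. -/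
class InverseMonoid (M : Type*) extends Monoid M, Inv M where
  mul_inv_rev : ∀ a b : M, (a * b)⁻¹ = b⁻¹ * a⁻¹
  inv_inv : ∀ a : M, a⁻¹⁻¹ = a
  mul_inv_mul : ∀ a : M, a * a⁻¹ * a = a
  idem_mul_comm : ∀ a b : M, a * a⁻¹ * (b * b⁻¹) = b * b⁻¹ * (a * a⁻¹)

/-- The natural partial order of an inverse monoid: `a ≤ b` iff `a = a a⁻¹ b`. -/
def natLe {M : Type*} [Monoid M] [Inv M] (a b : M) : Prop := a = a * a⁻¹ * b

/-- A congruence has group quotient iff every element of the quotient is (two-sided)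
invertible. -/
def IsGroupCon {M : Type*} [Monoid M] (c : Con M) : Prop := ∀ x : c.Quotient, IsUnit x

/-- The minimum group congruence σ of a monoid: the infimum of all congruences whose
quotient is a group.  For an inverse monoid this is the least group congruence, and
the quotient is the maximum group image. -/
def sigmaCon (M : Type*) [Monoid M] : Con M := sInf {c : Con M | IsGroupCon c}

/-- An inverse monoid is F-inverse if every σ-class has a maximum element in the
natural partial order. -/
def FInverse (M : Type*) [InverseMonoid M] : Prop :=
  ∀ a : M, ∃ m : M, sigmaCon M m a ∧ ∀ b : M, sigmaCon M b a → natLe b m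

/-- The word obtained from the prefix of length `k` of `w`. -/
def wordPrefix (w : Word X) (k : ℕ) : Word X :=
  FreeMonoid.ofList ((FreeMonoid.toList w).take k)

/-- `w` labels a simple path starting at `1` in the Cayley graph of the maximum group
image `S/σ` of the inverse monoid `S` (w.r.t. the generating map `ι`): the values of
distinct prefixes of `w` lie in distinct σ-classes, i.e. the vertices visited by the
path are pairwise distinct. -/
def IsSimplePathWordS {S : Type*} [InverseMonoid S] (ι : X → S) (w : Word X) : Prop :=
  ∀ j k : ℕ, j ≤ (FreeMonoid.toList w).length → k ≤ (FreeMonoid.toList w).length →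
    sigmaCon S (evalWord ι (wordPrefix w j)) (evalWord ι (wordPrefix w k)) → j = k

/-- An X-generated inverse monoid `S` (via `ι`) is strongly F-inverse: it is F-inverse,
and the canonical morphism from the Margolis-Meakin expansion `M(S/σ, X)` to `S` sends
all maximal elements of each σ-class of `M(S/σ,X)` (namely, the graphs spanned by simple
paths from 1 to a fixed vertex) to the single maximum element of the corresponding
σ-class of `S`.  Concretely: any two words labelling simple paths from 1 to the same
vertex of the Cayley graph of S/σ represent the same element of `S`, and this element
is the top of its σ-class. -/
def StronglyFInverse {S : Type*} [InverseMonoid S] (ι : X → S) : Prop :=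
  XGen ι ∧ FInverse S ∧
    ∀ u v : Word X, IsSimplePathWordS ι u → IsSimplePathWordS ι v →
      sigmaCon S (evalWord ι u) (evalWord ι v) →
      evalWord ι u = evalWord ι v ∧
        ∀ t : Word X, sigmaCon S (evalWord ι t) (evalWord ι u) →
          natLe (evalWord ι t) (evalWord ι u)

/-! ### Presentations of inverse monoids -/

/-- The generating pairs of the Wagner congruence on X̄*: `(w w⁻¹ w, w)` and
`(u u⁻¹ v v⁻¹, v v⁻¹ u u⁻¹)`. -/
def wagnerRel : Word X → Word X → Prop := fun a b =>
  (∃ w : Word X, a = w * wordInv w * w ∧ b = w) ∨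
  (∃ u v : Word X, a = u * wordInv u * (v * wordInv v) ∧ b = v * wordInv v * (u * wordInv u))

/-- The congruence on X̄* generated by the Wagner relations together with the extra
defining relations `r`; the corresponding quotient is the inverse monoid
`Inv⟨X ∣ r⟩`.  (The relation set is closed under formal inversion; this does not
change the congruence, since any monoid congruence on an inverse monoid automatically
respects inversion, but it makes the inversion on the quotient directly definable.) -/
def presCon (r : Word X → Word X → Prop) : Con (Word X) :=
  conGen (fun u v => (wagnerRel u v ∨ r u v) ∨
    (wagnerRel (wordInv u) (wordInv v) ∨ r (wordInv u) (wordInv v)))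

/-- The inverse monoid presented by the defining relations `r` (together with the
Wagner relations), i.e. `Inv⟨X ∣ r⟩`, a quotient of the free inverse monoid FIM(X). -/
def InvPres (r : Word X → Word X → Prop) : Type _ := (presCon r).Quotient

instance (r : Word X → Word X → Prop) : Monoid (InvPres r) :=
  inferInstanceAs (Monoid (presCon r).Quotient)

theorem presCon_inv {r : Word X → Word X → Prop} {u v : Word X} (h : presCon r u v) :
    presCon r (wordInv u) (wordInv v) := by
  show ConGen.Rel _ (wordInv u) (wordInv v)
  have h' : ConGen.Rel (fun u v => (wagnerRel u v ∨ r u v) ∨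
      (wagnerRel (wordInv u) (wordInv v) ∨ r (wordInv u) (wordInv v))) u v := h
  clear h
  induction h' with
  | of a b hab =>
    apply ConGen.Rel.of
    rcases hab with hab | hab
    · exact Or.inr (by rwa [wordInv_wordInv, wordInv_wordInv])
    · exact Or.inl hab
  | refl a => exact ConGen.Rel.refl _
  | symm _ ih => exact ConGen.Rel.symm ih
  | trans _ _ ih₁ ih₂ => exact ConGen.Rel.trans ih₁ ih₂
  | mul _ _ ih₁ ih₂ => rw [wordInv_mul, wordInv_mul]; exact ConGen.Rel.mul ih₂ ih₁

instance (r : Word X → Word X → Prop) : Inv (InvPres r) :=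
  ⟨Quotient.map' wordInv (fun _ _ h => presCon_inv h)⟩

instance (r : Word X → Word X → Prop) : InverseMonoid (InvPres r) where
  mul_inv_rev a b := by
    refine Quotient.inductionOn₂' a b (fun u v => ?_)
    exact congrArg Quotient.mk'' (wordInv_mul u v)
  inv_inv a := by
    refine Quotient.inductionOn' a (fun u => ?_)
    exact congrArg Quotient.mk'' (wordInv_wordInv u)
  mul_inv_mul a := by
    refine Quotient.inductionOn' a (fun u => ?_)
    exact Quotient.sound' (ConGen.Rel.of _ _ (Or.inl (Or.inl (Or.inl ⟨u, rfl, rfl⟩))))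
  idem_mul_comm a b := by
    refine Quotient.inductionOn₂' a b (fun u v => ?_)
    exact Quotient.sound' (ConGen.Rel.of _ _ (Or.inl (Or.inl (Or.inr ⟨u, v, rfl, rfl⟩))))

/-- The element of `Inv⟨X ∣ r⟩` represented by the word `w`. -/
def mkW (r : Word X → Word X → Prop) (w : Word X) : InvPres r := Quotient.mk'' w

/-- The canonical generating map `X → Inv⟨X ∣ r⟩`. -/
def genMap (r : Word X → Word X → Prop) : X → InvPres r :=
  fun x => mkW r (FreeMonoid.of (x, true))

/-- The defining relation of a special inverse monoid `Inv⟨X ∣ w = 1⟩`. -/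
def specialRel (w : Word X) : Word X → Word X → Prop := fun a b => a = w ∧ b = 1

/-- The defining relations of a special inverse monoid `Inv⟨X ∣ wᵢ = 1 (i ∈ I)⟩`. -/
def familyRel {I : Type*} (w : I → Word X) : Word X → Word X → Prop :=
  fun a b => ∃ i, a = w i ∧ b = 1

/-- The defining relations of an inverse monoid `Inv⟨X ∣ uᵢ = vᵢ (i ∈ I)⟩`. -/
def pairsRel {I : Type*} (p : I → Word X × Word X) : Word X → Word X → Prop :=
  fun a b => ∃ i, a = (p i).1 ∧ b = (p i).2

/-! ### Cayley graphs -/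

section Graph

variable {G : Type*} [Monoid G] [Inv G]

/-- The set of (inverse-closed pairs of) edges of the Cayley graph traversed by the
path starting at `g` and labelled by the list of letters `l`; an edge from `h`
labelled by the letter `a` is recorded as the pair `(h, a)`, together with its
inverse edge `(h·[a], a⁻¹)`. -/
def pathEdges (ιG : X → G) : G → List (Letter X) → Set (G × Letter X)
  | _, [] => ∅
  | g, a :: l =>
      insert (g, a) (insert (g * evalLetter ιG a, invL a)
        (pathEdges ιG (g * evalLetter ιG a) l))

/-- `Γ_w`: the subgraph (set of edges) of the Cayley graph of `G` spanned by the path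
starting at `1` labelled by the word `w`. -/
def Gamma (ιG : X → G) (w : Word X) : Set (G × Letter X) :=
  pathEdges ιG 1 (FreeMonoid.toList w)

/-- `w` labels a simple path starting at `1` in the Cayley graph of `G`: the values of
distinct prefixes of `w` are distinct vertices. -/
def IsSimplePathWordG (ιG : X → G) (w : Word X) : Prop :=
  ∀ j k : ℕ, j ≤ (FreeMonoid.toList w).length → k ≤ (FreeMonoid.toList w).length →
    evalWord ιG (wordPrefix w j) = evalWord ιG (wordPrefix w k) → j = k

/-- `w` labels a simple cycle (based at `1`) in the Cayley graph of `G`: `w` is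
non-empty, `w = 1` holds in `G`, and the initial vertices of the edges of the cycle
(i.e. the values of the proper prefixes of `w`) are pairwise distinct. -/
def IsSimpleCycleWordG (ιG : X → G) (w : Word X) : Prop :=
  w ≠ 1 ∧ evalWord ιG w = 1 ∧
    ∀ j k : ℕ, j < (FreeMonoid.toList w).length → k < (FreeMonoid.toList w).length →
      evalWord ιG (wordPrefix w j) = evalWord ιG (wordPrefix w k) → j = k

/-- The defining relation of the Margolis-Meakin expansion `M(G,X)` as a quotient of
X̄*: two words are identified iff they span the same subgraph of the Cayley graph and
represent the same element of `G`. -/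
def mmRel (ιG : X → G) : Word X → Word X → Prop := fun u v =>
  Gamma ιG u = Gamma ιG v ∧ evalWord ιG u = evalWord ιG v

/-- The generating pairs of the congruence ξ_G: two words labelling simple paths from
`1` to the same element of `G` are identified. -/
def spRel (ιG : X → G) : Word X → Word X → Prop := fun u v =>
  IsSimplePathWordG ιG u ∧ IsSimplePathWordG ιG v ∧ evalWord ιG u = evalWord ιG v

/-- The defining relations of `M_sF(G,X) = M(G,X)/ξ_G` as a quotient of X̄*. -/
def msfRel (ιG : X → G) : Word X → Word X → Prop := fun u v =>
  mmRel ιG u v ∨ spRel ιG u v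

/-- `M_sF(G,X)`: the quotient of the Margolis-Meakin expansion `M(G,X)` by the
congruence ξ_G identifying, for each `g ∈ G`, all graphs spanned by simple paths
from `1` to `g`. -/
abbrev MsF (ιG : X → G) := InvPres (msfRel ιG)

end Graph

/-! ### Reduced words, cyclic words, linked words, invertible pieces -/

/-- A word over X̄ is reduced if it has no factor of the form `x x⁻¹` or `x⁻¹ x`. -/
def ReducedWord (w : Word X) : Prop :=
  ∀ a : Letter X, ¬ ([a, invL a] <:+: FreeMonoid.toList w)

/-- A word over X̄ is cyclically reduced if it is reduced and its first and last
letters are not mutually inverse. -/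
def CyclicallyReducedWord (w : Word X) : Prop :=
  ReducedWord w ∧ ∀ a : Letter X, (FreeMonoid.toList w).head? = some a →
    (FreeMonoid.toList w).getLast? ≠ some (invL a)

/-- A cyclically reduced word is cyclic with respect to `(G,X)` if it labels a simple
cycle in the Cayley graph of `G`. -/
def IsCyclicWord {G : Type*} [Monoid G] [Inv G] (ιG : X → G) (w : Word X) : Prop :=
  CyclicallyReducedWord w ∧ IsSimpleCycleWordG ιG w

/-- `w'` is a cyclic conjugate of `w`. -/
def IsCyclicConjugate (w' w : Word X) : Prop := ∃ u v : Word X, w' = u * v ∧ v * u = w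

/-- A word is linked with respect to `(M, ι)` if for every pair of adjacent letters
`a, b` of the word, `a⁻¹ a = b b⁻¹` holds in `M` (the letters are "matching"). -/
def Linked {M : Type*} [Monoid M] [Inv M] (ι : X → M) (w : Word X) : Prop :=
  ∀ (p q : Word X) (a b : Letter X),
    w = p * (FreeMonoid.of a * (FreeMonoid.of b * q)) →
    (evalLetter ι a)⁻¹ * evalLetter ι a = evalLetter ι b * (evalLetter ι b)⁻¹

/-- `ws` is the factorisation of the word `w` into minimal invertible pieces with
respect to `(M, ι)`: `w` is the concatenation of the members of `ws`, each of which is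
a non-empty word representing an invertible element of `M` such that no proper
non-empty prefix or suffix represents an invertible element of `M`. -/
def IsPieceDecomp {M : Type*} [Monoid M] [Inv M] (ι : X → M) (w : Word X)
    (ws : List (Word X)) : Prop :=
  ws.prod = w ∧ ∀ z ∈ ws, z ≠ 1 ∧ IsUnit (evalWord ι z) ∧
    ∀ p s : Word X, z = p * s → p ≠ 1 → s ≠ 1 →
      ¬ IsUnit (evalWord ι p) ∧ ¬ IsUnit (evalWord ι s)


section Proof

variable {G : Type*} [Group G]

/-! ### Evaluation of words in a group -/

theorem evalWord_one {M : Type*} [Monoid M] [Inv M] (ι : X → M) :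
    evalWord ι 1 = 1 := by
  simp [evalWord]

theorem evalWord_mul {M : Type*} [Monoid M] [Inv M] (ι : X → M) (u v : Word X) :
    evalWord ι (u * v) = evalWord ι u * evalWord ι v := by
  simp [evalWord]

theorem evalLetter_invL (ιG : X → G) (a : Letter X) :
    evalLetter ιG (invL a) = (evalLetter ιG a)⁻¹ := by
  rcases a with ⟨x, _ | _⟩ <;> simp [evalLetter, invL]

theorem prod_eval_inv (ιG : X → G) (l : List (Letter X)) :
    ((l.reverse.map invL).map (evalLetter ιG)).prod = ((l.map (evalLetter ιG)).prod)⁻¹ := by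
  induction l with
  | nil => simp
  | cons a l ih =>
    simp only [List.reverse_cons, List.map_append, List.prod_append, ih, List.map_cons,
      List.map_nil, List.prod_cons, List.prod_nil, mul_one, mul_inv_rev, evalLetter_invL]

theorem evalWord_wordInv (ιG : X → G) (u : Word X) :
    evalWord ιG (wordInv u) = (evalWord ιG u)⁻¹ :=
  prod_eval_inv ιG (FreeMonoid.toList u)

/-! ### Subgraphs spanned by paths, and loop erasure -/

theorem pathEdges_append (ιG : X → G) (g : G) (l m : List (Letter X)) :
    pathEdges ιG g (l ++ m) =
      pathEdges ιG g l ∪ pathEdges ιG (g * (l.map (evalLetter ιG)).prod) m := by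
  induction l generalizing g with
  | nil => simp [pathEdges]
  | cons a l ih =>
    simp [pathEdges, ih, Set.insert_union, mul_assoc]

/-- Traversing a path backwards, from its endpoint, spans the same subgraph. -/
theorem pathEdges_inv (ιG : X → G) (g : G) (l : List (Letter X)) :
    pathEdges ιG (g * (l.map (evalLetter ιG)).prod) (l.reverse.map invL) =
      pathEdges ιG g l := by
  induction l generalizing g with
  | nil => simp [pathEdges]
  | cons a l ih =>
    simp only [List.map_cons, List.prod_cons, List.reverse_cons, List.map_append, List.map_nil,
      pathEdges_append, prod_eval_inv, ← mul_assoc, ih]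
    simp only [mul_inv_cancel_right, pathEdges, invL_invL, evalLetter_invL]
    ext e
    simp only [Set.mem_union, Set.mem_insert_iff, Set.mem_empty_iff_false]
    tauto

theorem Gamma_mul_wordInv_mul (ιG : X → G) (u p : Word X) :
    Gamma ιG (u * wordInv u * p) = Gamma ιG u ∪ Gamma ιG p := by
  have hrev := pathEdges_inv ιG 1 (FreeMonoid.toList u)
  simp only [one_mul] at hrev
  simp only [Gamma, FreeMonoid.toList_mul, wordInv, FreeMonoid.toList_ofList,
    pathEdges_append, List.map_append, List.prod_append, prod_eval_inv, one_mul,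
    mul_inv_cancel, hrev, Set.union_self]

/-- Loop erasure: a path can be cut down to a simple one with the same endpoints, running
inside the subgraph spanned by the original path. -/
theorem exists_simple (ιG : X → G) (u : Word X) :
    ∃ p : Word X, IsSimplePathWordG ιG p ∧ evalWord ιG p = evalWord ιG u ∧
      Gamma ιG p ⊆ Gamma ιG u := by
  induction hn : (FreeMonoid.toList u).length using Nat.strong_induction_on generalizing u with
  | _ n ih =>
  subst hn
  by_cases hs : IsSimplePathWordG ιG u
  · exact ⟨u, hs, rfl, subset_rfl⟩
  have hjk : ∃ j k : ℕ, j < k ∧ k ≤ (FreeMonoid.toList u).length ∧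
      evalWord ιG (wordPrefix u j) = evalWord ιG (wordPrefix u k) := by
    simp only [IsSimplePathWordG] at hs
    push Not at hs
    obtain ⟨j, k, hj, hk, h, hne⟩ := hs
    rcases lt_or_gt_of_ne hne with hlt | hlt
    · exact ⟨j, k, hlt, hk, h⟩
    · exact ⟨k, j, hlt, hj, h.symm⟩
  obtain ⟨j, k, hlt, hk, h⟩ := hjk
  simp only [evalWord, wordPrefix, FreeMonoid.toList_ofList] at h
  set l := FreeMonoid.toList u with hl
  have hval : ((l.take j ++ l.drop k).map (evalLetter ιG)).prod =
      (l.map (evalLetter ιG)).prod := by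
    conv_rhs => rw [← List.take_append_drop k l]
    rw [List.map_append, List.map_append, List.prod_append, List.prod_append, h]
  have hsub : pathEdges ιG 1 (l.take j ++ l.drop k) ⊆ pathEdges ιG 1 l := by
    conv_rhs => rw [← List.take_append_drop k l]
    rw [pathEdges_append, pathEdges_append, h]
    refine Set.union_subset_union_left _ ?_
    have htake : l.take k = l.take j ++ (l.take k).drop j := by
      conv_lhs => rw [← List.take_append_drop j (l.take k)]
      rw [List.take_take, min_eq_left hlt.le]
    rw [htake, pathEdges_append]
    exact Set.subset_union_left
  obtain ⟨p, hp, hpv, hps⟩ := ih (l.take j ++ l.drop k).length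
    (by simp only [List.length_append, List.length_take, List.length_drop]; omega)
    (FreeMonoid.ofList (l.take j ++ l.drop k)) rfl
  exact ⟨p, hp, hpv.trans hval, hps.trans hsub⟩

/-! ### Words in a presented inverse monoid -/

theorem mkW_mul (r : Word X → Word X → Prop) (u v : Word X) :
    mkW r (u * v) = mkW r u * mkW r v := rfl

theorem mkW_wordInv (r : Word X → Word X → Prop) (u : Word X) :
    mkW r (wordInv u) = (mkW r u)⁻¹ := rfl

theorem mkW_surj (r : Word X → Word X → Prop) (s : InvPres r) : ∃ w, mkW r w = s :=
  Quotient.exists_rep s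

theorem evalLetter_genMap (r : Word X → Word X → Prop) (a : Letter X) :
    evalLetter (genMap r) a = mkW r (FreeMonoid.of a) := by
  rcases a with ⟨x, _ | _⟩ <;> rfl

theorem evalWord_genMap (r : Word X → Word X → Prop) (w : Word X) :
    evalWord (genMap r) w = mkW r w := by
  induction w using FreeMonoid.inductionOn' with
  | one => exact evalWord_one _
  | of_mul a w ih =>
    rw [evalWord_mul, mkW_mul, ih, ← evalLetter_genMap]
    simp [evalWord]

theorem mkW_eq_of_rel {r : Word X → Word X → Prop} {u v : Word X} (h : r u v) :
    mkW r u = mkW r v :=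
  Quotient.sound' (ConGen.Rel.of _ _ (Or.inl (Or.inr h)))

/-! ### The morphism from `M_sF(G,X)` to `G` -/

theorem wagnerRel_eval (ιG : X → G) {u v : Word X} (h : wagnerRel u v) :
    evalWord ιG u = evalWord ιG v := by
  rcases h with ⟨w, rfl, rfl⟩ | ⟨a, b, rfl, rfl⟩ <;>
    simp [evalWord_mul, evalWord_wordInv]

theorem msfRel_eval (ιG : X → G) {u v : Word X} (h : msfRel ιG u v) :
    evalWord ιG u = evalWord ιG v := by
  rcases h with h | h
  · exact h.2
  · exact h.2.2

/-- Evaluation of words in `G`, as a monoid morphism. -/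
def evalHom (ιG : X → G) : Word X →* G where
  toFun := evalWord ιG
  map_one' := evalWord_one ιG
  map_mul' := evalWord_mul ιG

theorem presCon_le_ker (ιG : X → G) : presCon (msfRel ιG) ≤ Con.ker (evalHom ιG) := by
  refine Con.conGen_le.2 fun u v h => ?_
  change evalWord ιG u = evalWord ιG v
  rcases h with (h | h) | (h | h)
  · exact wagnerRel_eval ιG h
  · exact msfRel_eval ιG h
  · have := wagnerRel_eval ιG h
    rwa [evalWord_wordInv, evalWord_wordInv, inv_inj] at this
  · have := msfRel_eval ιG h
    rwa [evalWord_wordInv, evalWord_wordInv, inv_inj] at this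

/-- The canonical morphism from `M_sF(G,X)` to `G`, sending the class of a word to its value. -/
def toG (ιG : X → G) : MsF ιG →* G :=
  Con.lift (presCon (msfRel ιG)) (evalHom ιG) (presCon_le_ker ιG)

theorem toG_mkW (ιG : X → G) (w : Word X) : toG ιG (mkW (msfRel ιG) w) = evalWord ιG w := rfl

theorem isGroupCon_ker_toG (ιG : X → G) : IsGroupCon (Con.ker (toG ιG)) := by
  intro x
  induction x using Con.induction_on with
  | _ s =>
  obtain ⟨w, rfl⟩ := mkW_surj _ s
  refine isUnit_iff_exists.2
    ⟨((mkW (msfRel ιG) (wordInv w) : MsF ιG) : (Con.ker (toG ιG)).Quotient), ?_, ?_⟩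
  · rw [← Con.coe_mul, ← Con.coe_one, Con.eq, Con.ker_rel]
    simp [toG_mkW, evalWord_wordInv]
  · rw [← Con.coe_mul, ← Con.coe_one, Con.eq, Con.ker_rel]
    simp [toG_mkW, evalWord_wordInv]

/-! ### Maximal elements and the minimum group congruence -/

/-- Every element of `M_sF(G,X)` lies below the one represented by any simple path with the
same value in `G`: loop erasure provides one such simple path, inside `Γ_u`, and all simple
paths to a given vertex are identified in `M_sF(G,X)`. -/
theorem natLe_simple (ιG : X → G) (u p : Word X) (hp : IsSimplePathWordG ιG p)
    (h : evalWord ιG u = evalWord ιG p) :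
    natLe (mkW (msfRel ιG) u) (mkW (msfRel ιG) p) := by
  obtain ⟨q, hq, hqv, hqs⟩ := exists_simple ιG u
  have hpq : mkW (msfRel ιG) q = mkW (msfRel ιG) p :=
    mkW_eq_of_rel (Or.inr ⟨hq, hp, hqv.trans h⟩)
  rw [natLe, ← hpq, ← mkW_wordInv, ← mkW_mul, ← mkW_mul]
  refine mkW_eq_of_rel (Or.inl ⟨?_, ?_⟩)
  · rw [Gamma_mul_wordInv_mul, Set.union_eq_left.2 hqs]
  · rw [evalWord_mul, evalWord_mul, evalWord_wordInv, mul_inv_cancel, one_mul, hqv]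

/-- A group congruence cannot separate comparable elements, since it sends the idempotent
`a a⁻¹` to `1`. -/
theorem IsGroupCon.rel_of_natLe {M : Type*} [InverseMonoid M] {c : Con M} (hc : IsGroupCon c)
    {a b : M} (h : natLe a b) : c a b := by
  have hidem : ((a * a⁻¹ : M) : c.Quotient) * ((a * a⁻¹ : M) : c.Quotient) =
      ((a * a⁻¹ : M) : c.Quotient) := by
    rw [← Con.coe_mul, ← mul_assoc, InverseMonoid.mul_inv_mul]
  have hone : ((a * a⁻¹ : M) : c.Quotient) = 1 := (hc _).mul_eq_left.1 hidem
  refine (Con.eq c).1 ?_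
  conv_lhs => rw [show a = a * a⁻¹ * b from h]
  rw [Con.coe_mul, hone, one_mul]

theorem sigma_iff (ιG : X → G) (u v : Word X) :
    sigmaCon (MsF ιG) (mkW (msfRel ιG) u) (mkW (msfRel ιG) v) ↔
      evalWord ιG u = evalWord ιG v := by
  constructor
  · intro h
    have hle : sigmaCon (MsF ιG) ≤ Con.ker (toG ιG) := sInf_le (isGroupCon_ker_toG ιG)
    exact hle h
  · intro h c hc
    obtain ⟨p, hp, hpv, -⟩ := exists_simple ιG u
    exact c.trans (IsGroupCon.rel_of_natLe hc (natLe_simple ιG u p hp hpv.symm))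
      (c.symm (IsGroupCon.rel_of_natLe hc (natLe_simple ιG v p hp (h.symm.trans hpv.symm))))

theorem isSimple_iff (ιG : X → G) (w : Word X) :
    IsSimplePathWordS (genMap (msfRel ιG)) w ↔ IsSimplePathWordG ιG w := by
  simp only [IsSimplePathWordS, IsSimplePathWordG, evalWord_genMap, sigma_iff]

end Proof

/-- Let `G` be an `X`-generated group.  Then the quotient
`M_sF(G,X) = M(G,X)/ξ_G` is an `X`-generated inverse monoid (via
`x ↦ (Γ_x,[x])ξ_G`, which is the map `genMap (msfRel ιG)`), it is strongly
F-inverse, its minimum group congruence is `σ/ξ_G` (i.e. two classes of words are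
σ-related in `M_sF(G,X)` precisely when the words have the same value in `G`), and
its maximum group image is `G` (via a canonical isomorphism). -/
theorem statement_0 {X G : Type*} [Group G] (ιG : X → G) (hG : XGen ιG) :
    XGen (genMap (msfRel ιG)) ∧
    StronglyFInverse (genMap (msfRel ιG)) ∧
    (∀ u v : Word X,
      sigmaCon (MsF ιG) (mkW (msfRel ιG) u) (mkW (msfRel ιG) v) ↔
        evalWord ιG u = evalWord ιG v) ∧
    ∃ e : (sigmaCon (MsF ιG)).Quotient ≃* G,
      ∀ w : Word X,
        e ((sigmaCon (MsF ιG)).mk' (mkW (msfRel ιG) w)) = evalWord ιG w := by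
  have hgen : XGen (genMap (msfRel ιG)) := fun s => by
    obtain ⟨w, rfl⟩ := mkW_surj _ s
    exact ⟨w, evalWord_genMap _ w⟩
  refine ⟨hgen, ⟨hgen, ?_, ?_⟩, sigma_iff ιG, ?_⟩
  · intro a
    obtain ⟨u, rfl⟩ := mkW_surj _ a
    obtain ⟨p, hp, hpv, -⟩ := exists_simple ιG u
    refine ⟨mkW _ p, (sigma_iff ιG p u).2 hpv, fun b hb => ?_⟩
    obtain ⟨t, rfl⟩ := mkW_surj _ b
    exact natLe_simple ιG t p hp (((sigma_iff ιG t u).1 hb).trans hpv.symm)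
  · intro u v hu hv huv
    rw [isSimple_iff] at hu hv
    simp only [evalWord_genMap, sigma_iff] at huv ⊢
    exact ⟨mkW_eq_of_rel (Or.inr ⟨hu, hv, huv⟩), fun t ht => natLe_simple ιG t u hu ht⟩
  · have hker : sigmaCon (MsF ιG) ≤ Con.ker (toG ιG) := sInf_le (isGroupCon_ker_toG ιG)
    refine ⟨MulEquiv.ofBijective (Con.lift _ (toG ιG) hker) ⟨?_, ?_⟩, fun w => rfl⟩
    · intro x y
      induction x, y using Con.induction_on₂ with
      | _ a b =>
      obtain ⟨u, rfl⟩ := mkW_surj _ a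
      obtain ⟨v, rfl⟩ := mkW_surj _ b
      intro h
      exact (Con.eq _).2 ((sigma_iff ιG u v).2 h)
    · intro g
      obtain ⟨w, rfl⟩ := hG g
      exact ⟨((mkW (msfRel ιG) w : MsF ιG) : (sigmaCon (MsF ιG)).Quotient), rfl⟩

end SFI
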